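/- Let 1/2 ≤ α ≤ 1 and r > 0. Then E_α(r) ≥ E_{α,α}(r)/r − 1/(Γ(α)·r) + 1 − 1/Γ(2α); equivalently, r·E_α(r) − r ≥ E_{α,α}(r) − 1/Γ(α) − r/Γ(2α). -/

import Mathlib

open Real

/-- The Mittag-Leffler function `E_α(r) = ∑ r^k / Γ(1+kα)`. -/
noncomputable def mittagLeffler (α r : ℝ) : ℝ :=
  ∑' k : ℕ, r ^ k / Real.Gamma (1 + k * α)

/-- The Mittag-Leffler function `E_{α,α}(r) = ∑ r^k / Γ(α+kα)`. -/
noncomputable def mittagLefflerAA (α r : ℝ) : ℝ :=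
  ∑' k : ℕ, r ^ k / Real.Gamma (α + k * α)

/-!
With the two-parameter function `E_{α,β}(r) = ∑ r^k / Γ(β+kα)`, the recurrence
`E_{α,β}(r) = 1/Γ(β) + r E_{α,β+α}(r)` turns the inequality into `E_{α,3α}(r) ≤ E_{α,1+α}(r)`.
For `α ≥ 1/2` we have `3/2 ≤ 1 + α ≤ 3α`, so it is enough that `Γ` increases on `[3/2, ∞)`; by
convexity this amounts to `Γ'(3/2) ≥ 0`, that is, `γ + 2 log 2 ≤ 2`.
-/

open Set

theorem monotoneOn_inter_Ici_of_convexOn_of_hasDerivAt_nonneg {S : Set ℝ} {f : ℝ → ℝ} {a f' : ℝ}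
    (hf : ConvexOn ℝ S f) (ha : a ∈ S) (hderiv : HasDerivAt f f' a) (hf' : 0 ≤ f') :
    MonotoneOn f (S ∩ Ici a) := by
  have hmin {x : ℝ} (hx : x ∈ S ∩ Ici a) : f a ≤ f x := by
    rcases (mem_Ici.mp hx.2).eq_or_lt with rfl | hax
    · rfl
    · have hslope : 0 ≤ slope f a x := hf'.trans (hf.le_slope_of_hasDerivAt ha hx.1 hax hderiv)
      rwa [slope_def_field, le_div_iff₀ (sub_pos.mpr hax), zero_mul, sub_nonneg] at hslope
  intro x hx y hy hxy
  rcases (mem_Ici.mp hx.2).eq_or_lt with rfl | hax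
  · exact hmin hy
  · exact hf.le_right_of_left_le'' ha hy.1 hax hxy (hmin hx)

theorem hasDerivAt_Gamma_add_one {s Γ' : ℝ} (hs : s ≠ 0) (h : HasDerivAt Gamma Γ' s) :
    HasDerivAt Gamma (Gamma s + s * Γ') (s + 1) := by
  have hprod : HasDerivAt (fun t => t * Gamma t) (Gamma s + s * Γ') s := by
    simpa only [one_mul] using (hasDerivAt_id' s).fun_mul h
  have hshift : HasDerivAt (fun t => Gamma (t + 1)) (Gamma s + s * Γ') (s + 1 - 1) := by
    rw [add_sub_cancel_right]
    refine hprod.congr_of_eventuallyEq ?_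
    filter_upwards [eventually_ne_nhds hs] with t ht using Gamma_add_one ht
  simpa only [sub_add_cancel] using hshift.comp_sub_const (s + 1) 1

theorem eulerMascheroniConstant_add_two_mul_log_two_le_two :
    eulerMascheroniConstant + 2 * log 2 ≤ 2 := by
  have hγ : eulerMascheroniConstant < harmonic 16 - log (16 : ℕ) :=
    eulerMascheroniConstant_lt_eulerMascheroniSeq' 16
  have hlog : log (16 : ℕ) = 4 * log 2 := by
    rw [show ((16 : ℕ) : ℝ) = 2 ^ 4 by norm_num, log_pow, Nat.cast_ofNat]
  have hharmonic : (harmonic 16 : ℝ) ≤ 3.381 := by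
    norm_num [harmonic, Finset.sum_range_succ]
  linarith [log_two_gt_d9]

theorem monotoneOn_Gamma_Ici_three_halves : MonotoneOn Gamma (Ici (3 / 2)) := by
  have hderiv := hasDerivAt_Gamma_add_one one_half_pos.ne' hasDerivAt_Gamma_one_half
  rw [Gamma_one_half_eq, show (1 / 2 + 1 : ℝ) = 3 / 2 by norm_num] at hderiv
  have hnonneg : 0 ≤ √π + 1 / 2 * (-√π * (eulerMascheroniConstant + 2 * log 2)) := by
    nlinarith [sqrt_nonneg π, eulerMascheroniConstant_add_two_mul_log_two_le_two]
  refine (monotoneOn_inter_Ici_of_convexOn_of_hasDerivAt_nonneg convexOn_Gamma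
    (by norm_num) hderiv hnonneg).mono fun x hx => ⟨?_, hx⟩
  exact lt_of_lt_of_le (by norm_num) (mem_Ici.mp hx)

theorem rpow_mul_exp_neg_le_Gamma {c x : ℝ} (hc : 0 ≤ c) (hx : 1 ≤ x) :
    c ^ (x - 1) * exp (-c) ≤ Gamma x := by
  have hsub : Ioi c ⊆ Ioi 0 := Ioi_subset_Ioi hc
  have hint := GammaIntegral_convergent (zero_lt_one.trans_le hx)
  calc c ^ (x - 1) * exp (-c) = ∫ t in Ioi c, exp (-t) * c ^ (x - 1) := by
        rw [MeasureTheory.integral_mul_const, integral_exp_neg_Ioi, mul_comm]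
    _ ≤ ∫ t in Ioi c, exp (-t) * t ^ (x - 1) := by
        refine MeasureTheory.setIntegral_mono_on ((integrableOn_exp_neg_Ioi c).mul_const _)
          (hint.mono_set hsub) measurableSet_Ioi fun t ht => ?_
        gcongr
        exact (mem_Ioi.mp ht).le
    _ ≤ ∫ t in Ioi 0, exp (-t) * t ^ (x - 1) := by
        refine MeasureTheory.setIntegral_mono_set hint ?_ hsub.eventuallyLE
        filter_upwards [MeasureTheory.ae_restrict_mem measurableSet_Ioi] with t ht
        exact mul_nonneg (exp_pos _).le (rpow_nonneg (le_of_lt ht) _)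
    _ = Gamma x := (Gamma_eq_integral (zero_lt_one.trans_le hx)).symm

/-- The two-parameter Mittag-Leffler function `E_{α,β}(r)`, which specializes to `E_α` at `β = 1`
and to `E_{α,α}` at `β = α`. Terms at poles of `Γ` vanish, since Mathlib sets `Γ = 0` there. -/
noncomputable def mittagLeffler₂ (α β r : ℝ) : ℝ :=
  ∑' k : ℕ, r ^ k / Gamma (β + k * α)

theorem summable_mittagLeffler₂ {α : ℝ} (hα : 0 < α) (β r : ℝ) :
    Summable fun k : ℕ => r ^ k / Gamma (β + k * α) := by
  -- Choosing `c ^ α > |r|` in the lower bound for `Γ` gives a geometric majorant.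
  obtain ⟨c, hc, hcα⟩ : ∃ c : ℝ, 0 < c ∧ c ^ α = |r| + 1 :=
    ⟨(|r| + 1) ^ α⁻¹, by positivity, rpow_inv_rpow (by positivity) hα.ne'⟩
  have hratio : |r| / c ^ α < 1 := by
    rw [hcα]
    exact (div_lt_one (by positivity)).mpr (lt_add_one _)
  have hgeom : Summable fun k : ℕ => (c ^ (β - 1) * exp (-c))⁻¹ * (|r| / c ^ α) ^ k :=
    (summable_geometric_of_lt_one (by positivity) hratio).mul_left _
  refine hgeom.of_norm_bounded_eventually_nat ?_
  have hlarge : ∀ᶠ k : ℕ in Filter.atTop, 1 ≤ β + k * α :=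
    (Filter.tendsto_atTop_add_const_left _ β
      (tendsto_natCast_atTop_atTop.atTop_mul_const hα)).eventually_ge_atTop 1
  filter_upwards [hlarge] with k hk
  have hΓ := rpow_mul_exp_neg_le_Gamma hc.le hk
  calc ‖r ^ k / Gamma (β + k * α)‖ = |r| ^ k / Gamma (β + k * α) := by
        rw [norm_div, norm_pow, norm_eq_abs, norm_of_nonneg (Gamma_nonneg_of_nonneg (by linarith))]
    _ ≤ |r| ^ k / (c ^ (β + k * α - 1) * exp (-c)) := by gcongr
    _ = (c ^ (β - 1) * exp (-c))⁻¹ * (|r| / c ^ α) ^ k := by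
        rw [show β + k * α - 1 = β - 1 + α * k by ring, rpow_add hc, rpow_mul_natCast hc.le,
          div_pow]
        field_simp

theorem mittagLeffler₂_eq_one_div_Gamma_add {α : ℝ} (hα : 0 < α) (β r : ℝ) :
    mittagLeffler₂ α β r = 1 / Gamma β + r * mittagLeffler₂ α (β + α) r := by
  rw [mittagLeffler₂, (summable_mittagLeffler₂ hα β r).tsum_eq_zero_add, mittagLeffler₂,
    ← tsum_mul_left]
  congr 1
  · simp
  · refine tsum_congr fun k => ?_
    rw [pow_succ', mul_div_assoc, Nat.cast_add_one, show β + (k + 1) * α = β + α + k * α by ring]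

theorem antitoneOn_mittagLeffler₂ {α r : ℝ} (hα : 0 < α) (hr : 0 ≤ r) :
    AntitoneOn (fun β => mittagLeffler₂ α β r) (Ici (3 / 2)) := by
  intro β₁ hβ₁ β₂ hβ₂ hβ
  rw [mem_Ici] at hβ₁ hβ₂
  refine (summable_mittagLeffler₂ hα β₂ r).tsum_le_tsum (fun k => ?_)
    (summable_mittagLeffler₂ hα β₁ r)
  have hkα : 0 ≤ k * α := by positivity
  have hΓ : Gamma (β₁ + k * α) ≤ Gamma (β₂ + k * α) :=
    monotoneOn_Gamma_Ici_three_halves (mem_Ici.mpr (by linarith)) (mem_Ici.mpr (by linarith))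
      (by linarith)
  exact div_le_div_of_nonneg_left (by positivity) (Gamma_pos_of_pos (by linarith)) hΓ

theorem mittagLeffler_ge_general (α r : ℝ) (hα : 1 / 2 ≤ α) (hr : 0 < r) :
    mittagLeffler α r ≥ mittagLefflerAA α r / r - 1 / (Gamma α * r) + 1 - 1 / Gamma (2 * α) := by
  have hα₀ : 0 < α := by linarith
  have hE : mittagLeffler α r = 1 + r * mittagLeffler₂ α (1 + α) r :=
    (mittagLeffler₂_eq_one_div_Gamma_add hα₀ 1 r).trans (by rw [Gamma_one, div_one])
  have hEAA : mittagLefflerAA α r =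
      1 / Gamma α + r * (1 / Gamma (2 * α) + r * mittagLeffler₂ α (3 * α) r) := by
    rw [show 3 * α = 2 * α + α by ring, ← mittagLeffler₂_eq_one_div_Gamma_add hα₀, two_mul]
    exact mittagLeffler₂_eq_one_div_Gamma_add hα₀ α r
  have hanti : mittagLeffler₂ α (3 * α) r ≤ mittagLeffler₂ α (1 + α) r :=
    antitoneOn_mittagLeffler₂ hα₀ hr.le (mem_Ici.mpr (by linarith)) (mem_Ici.mpr (by linarith))
      (by linarith)
  calc mittagLefflerAA α r / r - 1 / (Gamma α * r) + 1 - 1 / Gamma (2 * α)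
      = 1 + r * mittagLeffler₂ α (3 * α) r := by
        rw [hEAA]
        field_simp
        ring
    _ ≤ 1 + r * mittagLeffler₂ α (1 + α) r := by gcongr
    _ = mittagLeffler α r := hE.symm

theorem mittagLeffler_ge (α r : ℝ) (hα : 1 / 2 ≤ α) (hα1 : α ≤ 1) (hr : 0 < r) :
    mittagLeffler α r ≥ mittagLefflerAA α r / r - 1 / (Real.Gamma α * r) +
      1 - 1 / Real.Gamma (2 * α) :=
  mittagLeffler_ge_general α r hα hr
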